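/- Let c : T → ℂ be even with absolutely summable Fourier coefficients and admit the factorization c(e^{iθ}) = c₊(e^{−iθ}) · G · c₊(e^{iθ}), where c₊(z) = Σ_{k≥0} γ_k z^k with Σ|γ_k| < ∞, c₊(0) = 1, c₊ nonvanishing on the closed unit disk, and G ∈ ℂ. Define b ∈ L¹[−1,1] by b(cos θ) = c(e^{iθ}) and ψ(e^{iθ}) = c₊(e^{−iθ}) c₊(e^{iθ})^{−1} χ(e^{iθ}). Then any bounded operator I + H(ψ) on ℓ²(ℕ) (with entries δ_{jk} + ψ_{j+k+1}) is invertible, and for every n ≥ 1: det H_n[b] = G^n · det[P_n (I + H(ψ))^{−1} P_n]. -/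

import Mathlib

open Filter MeasureTheory
open scoped InnerProductSpace

noncomputable section

/-- ℓ²(ℕ) over ℂ. -/
abbrev l2 : Type := lp (fun _ : ℕ => ℂ) 2

/-- The `k`-th Fourier coefficient of a function on the unit circle, given as a
`2π`-periodic function of the angle: `a_k = (1/(2π)) ∫_0^{2π} f(θ) e^{-ikθ} dθ`. -/
def fc (f : ℝ → ℂ) (k : ℤ) : ℂ :=
  ((1 / (2 * Real.pi) : ℝ) : ℂ) *
    ∫ θ in (0:ℝ)..(2 * Real.pi), f θ * Complex.exp (-(Complex.I * k * θ))

/-- The standard orthonormal basis vector `e_j` of ℓ²(ℕ). -/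
def ee (j : ℕ) : l2 := lp.single 2 j 1

/-- Matrix entry `⟨e_j, A e_k⟩` of an operator on ℓ²(ℕ). -/
def ent (A : l2 →L[ℂ] l2) (j k : ℕ) : ℂ := ⟪ee j, A (ee k)⟫_ℂ

/-- The function `χ` on the circle: `χ(e^{iθ}) = i` for `0 < θ < π` and
`χ(e^{iθ}) = −i` for `−π < θ < 0`. -/
def chi (θ : ℝ) : ℂ := if 0 < Real.sin θ then Complex.I else -Complex.I

/-- The Hankel-matrix entry `b_{m}` with `m = e + 1`:
`bmom b e = (1/π) ∫_{-1}^1 b(x)(2x)^e dx`. -/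
def bmom (b : ℝ → ℂ) (e : ℕ) : ℂ :=
  ((1 / Real.pi : ℝ) : ℂ) * ∫ x in (-1:ℝ)..1, b x * (2 * (x : ℂ)) ^ e

/-!
Let `a` be the boundary values of `c₊` and `ã(t) = a(t⁻¹)`, so that `ψ = ã a⁻¹ χ`. Write `P` for the
projection of `L²` onto the Hardy space, identified with `ℓ²(ℕ)`, and `T(f)` for Toeplitz operators.

The involution `v ↦ χ(t) t⁻¹ v(t⁻¹)` of `L²` commutes with multiplication by even functions. The
Fourier coefficients of `χ` are moments of a positive measure, so `1 + H(χ)` is invertible; it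
follows that `P` identifies the vectors fixed by the involution with `ℓ²(ℕ)`. Let `M(f)` be the
operator on `ℓ²(ℕ)` that corresponds to multiplication of fixed vectors by an even `f`. Then
`1 + H(ψ) = T(ã) M((a ã)⁻¹) (1 + H(χ)) T(a)`, that is,
`T(a) (1 + H(ψ))⁻¹ T(ã) = (1 + H(χ))⁻¹ M(a ã)`. The two Toeplitz factors are triangular with unit
diagonal, so they do not change the determinants of finite sections.

On the other side, `2 ⟪P v, (1 + H(χ))⁻¹ P w⟫ = ⟪v, w⟫` for fixed `v` and `w`. The projections of
the fixed vectors `u_k = (t + t⁻¹)^k (1 - t⁻²)^{1/2}` again form a triangular matrix with unit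
diagonal, and `G ⟪u_j, a ã u_k⟫` is twice the moment `b_{j+k+1}`, since `|1 - t⁻²| = 2 |sin θ|` is
twice the Jacobian of `x = cos θ`.
-/

section UnitriangularMatrices

/-- Upper triangular matrices, of possibly infinite size, with ones on the diagonal. Being unit
lower triangular is expressed through the transpose. -/
structure IsUnitUpperTriangular {ι R : Type*} [Zero R] [One R] [LT ι] (M : Matrix ι ι R) :
    Prop where
  isUpperTriangular : M.IsUpperTriangular
  diag_eq_one : ∀ i, M i i = 1

namespace IsUnitUpperTriangular

theorem submatrix {ι κ R : Type*} [Zero R] [One R] [Preorder ι] [Preorder κ] {M : Matrix ι ι R}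
    (hM : IsUnitUpperTriangular M) {f : κ → ι} (hf : StrictMono f) :
    IsUnitUpperTriangular (M.submatrix f f) :=
  ⟨fun _ _ hij => hM.isUpperTriangular (hf hij), fun _ => hM.diag_eq_one _⟩

theorem det_eq_one {ι R : Type*} [CommRing R] [LinearOrder ι] [Fintype ι] {M : Matrix ι ι R}
    (hM : IsUnitUpperTriangular M) : M.det = 1 := by
  rw [Matrix.det_of_isUpperTriangular hM.isUpperTriangular]
  exact Finset.prod_eq_one fun i _ => hM.diag_eq_one i

end IsUnitUpperTriangular

end UnitriangularMatrices

section SequenceSpace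

open scoped Matrix

theorem inner_ee (j : ℕ) (x : l2) : ⟪ee j, x⟫_ℂ = x j := by
  rw [ee, lp.inner_single_left]
  simp

theorem inner_ee_ee (j k : ℕ) : ⟪ee j, ee k⟫_ℂ = if j = k then 1 else 0 := by
  rw [inner_ee, ee, lp.single_apply, Pi.single_apply]

theorem hasSum_inner_smul_ee (x : l2) : HasSum (fun i => ⟪ee i, x⟫_ℂ • ee i) x := by
  convert lp.hasSum_single (p := 2) (by simp) x using 2 with i
  rw [inner_ee, ee, ← lp.single_smul, smul_eq_mul, mul_one]

theorem ext_inner_ee {x y : l2} (h : ∀ j, ⟪ee j, x⟫_ℂ = ⟪ee j, y⟫_ℂ) : x = y := by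
  ext j
  rw [← inner_ee, ← inner_ee, h]

theorem ext_ee {E : Type*} [NormedAddCommGroup E] [NormedSpace ℂ E] {X Y : l2 →L[ℂ] E}
    (h : ∀ k, X (ee k) = Y (ee k)) : X = Y := by
  ext x
  have hX := X.hasSum (hasSum_inner_smul_ee x)
  have hY := Y.hasSum (hasSum_inner_smul_ee x)
  simp only [map_smul, h] at hX hY
  exact hX.unique hY

theorem ext_ent {X Y : l2 →L[ℂ] l2} (h : ∀ j k, ent X j k = ent Y j k) : X = Y :=
  ext_ee fun k => ext_inner_ee fun j => h j k

theorem ent_one (j k : ℕ) : ent 1 j k = if j = k then 1 else 0 :=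
  inner_ee_ee j k

theorem ent_add (X Y : l2 →L[ℂ] l2) (j k : ℕ) : ent (X + Y) j k = ent X j k + ent Y j k :=
  inner_add_right _ _ _

theorem hasSum_ent_mul (X Y : l2 →L[ℂ] l2) (j k : ℕ) :
    HasSum (fun i => ent X j i * ent Y i k) (ent (X * Y) j k) := by
  have h := (innerSL ℂ (ee j) ∘L X).hasSum (hasSum_inner_smul_ee (Y (ee k)))
  refine h.congr_fun fun i => ?_
  simp [ent, mul_comm]

/-- The infinite matrix of an operator on `ℓ²(ℕ)`. -/
def entMatrix (X : l2 →L[ℂ] l2) : Matrix ℕ ℕ ℂ :=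
  Matrix.of (ent X)

/-- The infinite matrix whose columns are the coordinates of the vectors `u k`. -/
def coordMatrix (u : ℕ → l2) : Matrix ℕ ℕ ℂ :=
  Matrix.of fun j k => ⟪ee j, u k⟫_ℂ

/-- The upper left `n × n` block of an infinite matrix. -/
def finiteSection {R : Type*} (n : ℕ) (M : Matrix ℕ ℕ R) : Matrix (Fin n) (Fin n) R :=
  M.submatrix Fin.val Fin.val

theorem IsUnitUpperTriangular.det_finiteSection {R : Type*} [CommRing R] {M : Matrix ℕ ℕ R}
    (hM : IsUnitUpperTriangular M) (n : ℕ) : (finiteSection n M).det = 1 :=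
  (hM.submatrix Fin.val_strictMono).det_eq_one

theorem IsUnitUpperTriangular.det_finiteSection_of_transpose {R : Type*} [CommRing R]
    {M : Matrix ℕ ℕ R} (hM : IsUnitUpperTriangular Mᵀ) (n : ℕ) : (finiteSection n M).det = 1 := by
  rw [← Matrix.det_transpose]
  exact hM.det_finiteSection n

theorem finiteSection_mul_of_forall {n : ℕ} {X Y : l2 →L[ℂ] l2}
    (h : ∀ j < n, ∀ k < n, ∀ i ≥ n, ent X j i * ent Y i k = 0) :
    finiteSection n (entMatrix (X * Y))
      = finiteSection n (entMatrix X) * finiteSection n (entMatrix Y) := by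
  ext j k
  have hsum := hasSum_sum_of_ne_finset_zero (L := .unconditional ℕ) (s := Finset.range n)
    (f := fun i => ent X j i * ent Y i k) fun i hi => h j j.2 k k.2 i (by simpa using hi)
  rw [Finset.sum_range] at hsum
  exact (hasSum_ent_mul X Y j k).unique hsum

theorem finiteSection_mul_of_isUpperTriangular_right {X Y : l2 →L[ℂ] l2}
    (hY : (entMatrix Y).IsUpperTriangular) (n : ℕ) :
    finiteSection n (entMatrix (X * Y))
      = finiteSection n (entMatrix X) * finiteSection n (entMatrix Y) :=
  finiteSection_mul_of_forall fun _ _ k hk i hi =>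
    mul_eq_zero_of_right _ (hY (show k < i from hk.trans_le hi))

theorem finiteSection_mul_of_isUpperTriangular_transpose_left {X Y : l2 →L[ℂ] l2}
    (hX : (entMatrix X)ᵀ.IsUpperTriangular) (n : ℕ) :
    finiteSection n (entMatrix (X * Y))
      = finiteSection n (entMatrix X) * finiteSection n (entMatrix Y) :=
  finiteSection_mul_of_forall fun j hj _ _ i hi =>
    mul_eq_zero_of_left (hX (show j < i from hj.trans_le hi)) _

theorem det_finiteSection_mul_mul {L X U : l2 →L[ℂ] l2}
    (hL : IsUnitUpperTriangular (entMatrix L)ᵀ) (hU : IsUnitUpperTriangular (entMatrix U))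
    (n : ℕ) :
    (finiteSection n (entMatrix (L * X * U))).det = (finiteSection n (entMatrix X)).det := by
  rw [finiteSection_mul_of_isUpperTriangular_right hU.isUpperTriangular,
    finiteSection_mul_of_isUpperTriangular_transpose_left hL.isUpperTriangular, Matrix.det_mul,
    Matrix.det_mul, hL.det_finiteSection_of_transpose, hU.det_finiteSection, one_mul, mul_one]

theorem inner_sum_smul_ee {κ : Type*} (X : l2 →L[ℂ] l2) (s : Finset κ) (f : κ → ℕ)
    (x y : κ → ℂ) :
    ⟪∑ i ∈ s, x i • ee (f i), X (∑ k ∈ s, y k • ee (f k))⟫_ℂ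
      = ∑ i ∈ s, ∑ k ∈ s, (starRingEnd ℂ) (x i) * y k * ent X (f i) (f k) := by
  simp only [map_sum, map_smul, sum_inner, inner_sum, inner_smul_left, inner_smul_right, ent,
    Finset.mul_sum]
  rw [Finset.sum_comm]
  refine Finset.sum_congr rfl fun i _ => Finset.sum_congr rfl fun k _ => ?_
  ring

theorem eq_sum_inner_smul_ee {x : l2} {n : ℕ} (hx : ∀ i, n ≤ i → ⟪ee i, x⟫_ℂ = 0) :
    x = ∑ i : Fin n, ⟪ee i, x⟫_ℂ • ee i := by
  have hsum := hasSum_sum_of_ne_finset_zero (L := .unconditional ℕ) (s := Finset.range n)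
    (f := fun i => ⟪ee i, x⟫_ℂ • ee i) fun i hi => by rw [hx i (by simpa using hi), zero_smul]
  rw [Finset.sum_range] at hsum
  exact (hasSum_inner_smul_ee x).unique hsum

theorem finiteSection_gram (X : l2 →L[ℂ] l2) {u : ℕ → l2}
    (hu : (coordMatrix u).IsUpperTriangular) (n : ℕ) :
    (Matrix.of fun j k : Fin n => ⟪u j, X (u k)⟫_ℂ)
      = (finiteSection n (coordMatrix u))ᴴ * finiteSection n (entMatrix X)
        * finiteSection n (coordMatrix u) := by
  have hfin (k : Fin n) : u k = ∑ i : Fin n, ⟪ee i, u k⟫_ℂ • ee i :=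
    eq_sum_inner_smul_ee fun i hi => hu (show (k : ℕ) < i from k.2.trans_le hi)
  ext j k
  rw [Matrix.of_apply, hfin j, hfin k, inner_sum_smul_ee]
  simp only [Matrix.mul_apply, Matrix.conjTranspose_apply, finiteSection, coordMatrix, entMatrix,
    Matrix.submatrix_apply, Matrix.of_apply, Finset.sum_mul, Complex.star_def]
  rw [Finset.sum_comm]
  refine Finset.sum_congr rfl fun i _ => Finset.sum_congr rfl fun l _ => ?_
  ring

theorem det_gram (X : l2 →L[ℂ] l2) {u : ℕ → l2} (hu : IsUnitUpperTriangular (coordMatrix u))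
    (n : ℕ) :
    (Matrix.of fun j k : Fin n => ⟪u j, X (u k)⟫_ℂ).det = (finiteSection n (entMatrix X)).det := by
  rw [finiteSection_gram X hu.isUpperTriangular, Matrix.det_mul, Matrix.det_mul,
    Matrix.det_conjTranspose, hu.det_finiteSection, star_one, one_mul, mul_one]

end SequenceSpace

section Positivity

theorem isUnit_one_add_of_re_inner_nonneg {E : Type*} [NormedAddCommGroup E]
    [InnerProductSpace ℂ E] [CompleteSpace E] {X : E →L[ℂ] E} (hX : ∀ x, 0 ≤ (⟪x, X x⟫_ℂ).re) :
    IsUnit (1 + X) := by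
  refine ContinuousLinearMap.isUnit_of_forall_le_norm_inner_map _ (c := 1) one_pos fun x => ?_
  have hsq : (⟪x, x⟫_ℂ).re = ‖x‖ ^ 2 := inner_self_eq_norm_sq (𝕜 := ℂ) x
  calc ‖x‖ ^ 2 * ((1 : NNReal) : ℝ) = ‖x‖ ^ 2 := by simp
    _ ≤ (⟪x, x⟫_ℂ).re + (⟪x, X x⟫_ℂ).re := by linarith [hX x]
    _ = (⟪x, (1 + X) x⟫_ℂ).re := by rw [← Complex.add_re, ← inner_add_right]; rfl
    _ ≤ ‖⟪x, (1 + X) x⟫_ℂ‖ := Complex.re_le_norm _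
    _ = ‖⟪(1 + X) x, x⟫_ℂ‖ := norm_inner_symm _ _

variable {μ : Measure ℝ}

theorem sum_sum_moment_eq_integral (hμ : ∀ n : ℕ, Integrable (fun t : ℝ => t ^ n) μ)
    (x : ℕ → ℂ) (s : Finset ℕ) :
    ∑ i ∈ s, ∑ j ∈ s, (starRingEnd ℂ) (x i) * x j * ((∫ t, t ^ (i + j) ∂μ : ℝ) : ℂ)
      = ((∫ t, ‖∑ i ∈ s, x i * (t : ℂ) ^ i‖ ^ 2 ∂μ : ℝ) : ℂ) := by
  have hsq (t : ℝ) : ((‖∑ i ∈ s, x i * (t : ℂ) ^ i‖ ^ 2 : ℝ) : ℂ)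
      = ∑ i ∈ s, ∑ j ∈ s, (starRingEnd ℂ) (x i) * x j * ((t ^ (i + j) : ℝ) : ℂ) := by
    rw [Complex.ofReal_pow, ← Complex.conj_mul', map_sum, Finset.sum_mul_sum]
    refine Finset.sum_congr rfl fun i _ => Finset.sum_congr rfl fun j _ => ?_
    simp only [map_mul, map_pow, Complex.conj_ofReal, Complex.ofReal_pow]
    ring
  have hint (i j : ℕ) :
      Integrable (fun t : ℝ => (starRingEnd ℂ) (x i) * x j * ((t ^ (i + j) : ℝ) : ℂ)) μ :=
    ((hμ (i + j)).ofReal).const_mul _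
  rw [← integral_complex_ofReal]
  simp only [hsq]
  rw [integral_finsetSum _ fun i _ => integrable_finsetSum _ fun j _ => hint i j]
  refine Finset.sum_congr rfl fun i _ => ?_
  rw [integral_finsetSum _ fun j _ => hint i j]
  refine Finset.sum_congr rfl fun j _ => ?_
  rw [integral_const_mul, integral_complex_ofReal]

theorem re_inner_nonneg_of_ent_eq_moment (hμ : ∀ n : ℕ, Integrable (fun t : ℝ => t ^ n) μ)
    {X : l2 →L[ℂ] l2} (hX : ∀ j k, ent X j k = ((∫ t, t ^ (j + k) ∂μ : ℝ) : ℂ)) (x : l2) :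
    0 ≤ (⟪x, X x⟫_ℂ).re := by
  have hcont : Continuous fun y : l2 => (⟪y, X y⟫_ℂ).re :=
    Complex.continuous_re.comp (continuous_id.inner X.continuous)
  refine ge_of_tendsto' ((hcont.tendsto x).comp (hasSum_inner_smul_ee x)) fun s => ?_
  have hquad := inner_sum_smul_ee X s (fun i => i) (fun i => ⟪ee i, x⟫_ℂ) fun i => ⟪ee i, x⟫_ℂ
  simp only [hX, sum_sum_moment_eq_integral hμ] at hquad
  simp only [Function.comp_apply, hquad, Complex.ofReal_re]
  exact integral_nonneg fun t => sq_nonneg _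

end Positivity

section FourierCoefficients

variable {T : ℝ} [Fact (0 < T)]

theorem fourierCoeff_fourier_mul (m n : ℤ) (f : AddCircle T → ℂ) :
    fourierCoeff (fun t => fourier m t * f t) n = fourierCoeff f (n - m) := by
  simp only [fourierCoeff, smul_eq_mul, ← mul_assoc, ← fourier_add]
  congr! 5
  ring

theorem fourierCoeff_comp_neg (n : ℤ) (f : AddCircle T → ℂ) :
    fourierCoeff (fun t => f (-t)) n = fourierCoeff f (-n) := by
  rw [fourierCoeff, fourierCoeff, ← integral_neg_eq_self]
  simp

/-- Functions on the circle whose Fourier coefficients of negative index vanish: the boundary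
values of analytic functions on the disk. -/
def IsHardy (f : AddCircle T → ℂ) : Prop :=
  ∀ n < 0, fourierCoeff f n = 0

theorem inner_fourierLp (n : ℤ) (v : Lp ℂ 2 (AddCircle.haarAddCircle (T := T))) :
    ⟪fourierLp 2 n, v⟫_ℂ = fourierCoeff v n := by
  rw [← fourierBasis_repr, HilbertBasis.repr_apply_apply, coe_fourierBasis]

theorem ext_fourierCoeff {v w : Lp ℂ 2 (AddCircle.haarAddCircle (T := T))}
    (h : ∀ n, fourierCoeff v n = fourierCoeff w n) : v = w := by
  refine fourierBasis.repr.injective (lp.ext (funext fun n => ?_))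
  rw [fourierBasis_repr, fourierBasis_repr, h]

end FourierCoefficients

section Circle

instance fact_two_pi_pos : Fact (0 < 2 * Real.pi) := ⟨Real.two_pi_pos⟩

/-- The unit circle as `ℝ / 2πℤ`. A point `t` stands for the complex number `t.toCircle`. -/
abbrev Circ : Type := AddCircle (2 * Real.pi)

/-- The normalized Haar measure of the circle. -/
abbrev haar : Measure Circ := AddCircle.haarAddCircle

/-- The Hilbert space `L²` of the circle. -/
abbrev L2T : Type := Lp ℂ 2 haar

theorem fourier_eq_toCircle_zpow (n : ℤ) (t : Circ) : fourier n t = (t.toCircle : ℂ) ^ n := by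
  rw [fourier_apply, AddCircle.toCircle_zsmul, Circle.coe_zpow]

theorem coe_toCircle_coe (θ : ℝ) :
    ((AddCircle.toCircle (θ : Circ)) : ℂ) = Complex.exp (Complex.I * θ) := by
  rw [AddCircle.toCircle_apply_mk, Circle.coe_exp, div_self Real.two_pi_pos.ne', one_mul, mul_comm]

theorem continuous_coe_toCircle : Continuous fun t : Circ => (t.toCircle : ℂ) :=
  AddCircle.continuous_toCircle.subtype_val

theorem coe_toCircle_neg (t : Circ) : ((-t).toCircle : ℂ) = (t.toCircle : ℂ)⁻¹ := by
  rw [AddCircle.toCircle_neg, Circle.coe_inv]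

theorem integral_haar (f : Circ → ℂ) :
    ∫ t, f t ∂haar = ((1 / (2 * Real.pi) : ℝ) : ℂ) * ∫ θ in (0:ℝ)..(2 * Real.pi), f θ := by
  have h := AddCircle.intervalIntegral_preimage (2 * Real.pi) 0 f
  rw [zero_add] at h
  rw [AddCircle.integral_haarAddCircle, h, Complex.real_smul, one_div]

theorem fourierCoeff_eq_fc {F : Circ → ℂ} {f : ℝ → ℂ} (h : ∀ θ : ℝ, F θ = f θ) (n : ℤ) :
    fourierCoeff F n = fc f n := by
  rw [fourierCoeff, integral_haar, fc]
  simp only [h, fourier_eq_toCircle_zpow, coe_toCircle_coe, ← Complex.exp_int_mul, smul_eq_mul]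
  congr! 3 with θ
  rw [mul_comm]
  congr 2
  push_cast
  ring

theorem ae_comp_neg {p : Circ → Prop} (h : ∀ᵐ t ∂haar, p t) : ∀ᵐ t ∂haar, p (-t) :=
  (Measure.measurePreserving_neg haar).quasiMeasurePreserving.ae h

instance : NullSingletonClass haar where
  measure_singleton t := by
    have h : volume {t} = 0 := by
      have := AddCircle.volume_closedBall (2 * Real.pi) (x := t) 0
      rwa [Metric.closedBall_zero, mul_zero, min_eq_right Real.two_pi_pos.le,
        ENNReal.ofReal_zero] at this
    rw [AddCircle.volume_eq_smul_haarAddCircle, Measure.smul_apply, smul_eq_mul, mul_eq_zero] at h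
    exact h.resolve_left (ENNReal.ofReal_pos.mpr Real.two_pi_pos).ne'

theorem ae_im_toCircle_ne_zero : ∀ᵐ t : Circ ∂haar, (t.toCircle : ℂ).im ≠ 0 := by
  have hinj : Function.Injective fun t : Circ => (t.toCircle : ℂ) :=
    Subtype.val_injective.comp (AddCircle.injective_toCircle Real.two_pi_pos.ne')
  have hfin : {t : Circ | (t.toCircle : ℂ).im = 0}.Finite := by
    refine (((Set.finite_singleton (-1 : ℂ)).insert 1).preimage hinj.injOn).subset fun t ht => ?_
    have ht : (t.toCircle : ℂ).im = 0 := ht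
    have hsq : (t.toCircle : ℂ).re ^ 2 = 1 := by
      have h := Circle.normSq_coe t.toCircle
      rw [Complex.normSq_apply, ht] at h
      linarith
    rcases sq_eq_one_iff.mp hsq with h | h
    · exact Or.inl (Complex.ext h (by simpa using ht))
    · exact Or.inr (Complex.ext (by simpa using h) (by simpa using ht))
  simpa [ae_iff] using hfin.measure_zero haar

/-- The reflection `f ↦ f(t⁻¹)` of continuous functions on the circle. -/
def reflect : C(Circ, ℂ) →* C(Circ, ℂ) :=
  ContinuousMap.compMonoidHom' ⟨fun t => -t, continuous_neg⟩

theorem reflect_apply (f : C(Circ, ℂ)) (t : Circ) : reflect f t = f (-t) :=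
  rfl

theorem reflect_reflect (f : C(Circ, ℂ)) : reflect (reflect f) = f := by
  ext t
  rw [reflect_apply, reflect_apply, neg_neg]

theorem fourierCoeff_reflect (f : C(Circ, ℂ)) (n : ℤ) :
    fourierCoeff (reflect f) n = fourierCoeff f (-n) :=
  fourierCoeff_comp_neg n f

/-- The function `chi` of the angle as a function on the circle. -/
def chiCirc (t : Circ) : ℂ :=
  if 0 < (t.toCircle : ℂ).im then Complex.I else -Complex.I

theorem im_toCircle_coe (θ : ℝ) : (AddCircle.toCircle (θ : Circ) : ℂ).im = Real.sin θ := by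
  rw [coe_toCircle_coe, mul_comm, Complex.exp_ofReal_mul_I_im]

theorem chiCirc_coe (θ : ℝ) : chiCirc θ = chi θ := by
  rw [chiCirc, chi, im_toCircle_coe]

theorem conj_chiCirc (t : Circ) : (starRingEnd ℂ) (chiCirc t) = -chiCirc t := by
  unfold chiCirc
  split_ifs <;> simp

theorem chiCirc_mul_self (t : Circ) : chiCirc t * chiCirc t = -1 := by
  unfold chiCirc
  split_ifs <;> simp

theorem norm_chiCirc (t : Circ) : ‖chiCirc t‖ = 1 := by
  unfold chiCirc
  split_ifs <;> simp

theorem chiCirc_neg {t : Circ} (ht : (t.toCircle : ℂ).im ≠ 0) : chiCirc (-t) = -chiCirc t := by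
  have him : ((-t).toCircle : ℂ).im = -(t.toCircle : ℂ).im := by
    rw [AddCircle.toCircle_neg, Circle.coe_inv_eq_conj, Complex.conj_im]
  rw [chiCirc, chiCirc, him]
  rcases lt_or_gt_of_ne ht with h | h <;> simp [h, h.not_gt]

theorem measurable_chiCirc : Measurable chiCirc :=
  Measurable.ite (measurableSet_lt measurable_const (Complex.measurable_im.comp
      continuous_coe_toCircle.measurable))
    measurable_const measurable_const

theorem memLp_chiCirc : MemLp chiCirc ⊤ haar :=
  memLp_top_of_bound measurable_chiCirc.aestronglyMeasurable 1
    (Eventually.of_forall fun t => (norm_chiCirc t).le)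

end Circle

section DiskAlgebra

variable {Φ : ℂ → ℂ}

/-- The restriction to the circle of a function of the disk algebra. -/
def boundaryValue (hΦ : DiffContOnCl ℂ Φ (Metric.ball 0 1)) : C(Circ, ℂ) where
  toFun t := Φ t.toCircle
  continuous_toFun := hΦ.continuousOn_ball.comp_continuous continuous_coe_toCircle fun _ =>
    mem_closedBall_zero_iff.mpr (Circle.norm_coe _).le

theorem boundaryValue_apply (hΦ : DiffContOnCl ℂ Φ (Metric.ball 0 1)) (t : Circ) :
    boundaryValue hΦ t = Φ t.toCircle :=
  rfl

theorem integral_boundaryValue (hΦ : DiffContOnCl ℂ Φ (Metric.ball 0 1)) :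
    ∫ t, boundaryValue hΦ t ∂haar = Φ 0 := by
  have h := DiffContOnCl.circleAverage (f := Φ) (c := 0) (R := 1) (by simpa using hΦ)
  rw [← h, integral_haar, Real.circleAverage_def, Complex.real_smul, one_div]
  simp only [boundaryValue_apply, coe_toCircle_coe, circleMap, mul_comm Complex.I,
    Complex.ofReal_one, one_mul, zero_add]

theorem fourierCoeff_boundaryValue_neg (hΦ : DiffContOnCl ℂ Φ (Metric.ball 0 1)) (n : ℕ) :
    fourierCoeff (boundaryValue hΦ) (-n) = 0 ^ n * Φ 0 := by
  have hpow : DiffContOnCl ℂ (fun z : ℂ => z ^ n) (Metric.ball 0 1) :=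
    (differentiable_pow n).diffContOnCl
  have h : DiffContOnCl ℂ (fun z => z ^ n * Φ z) (Metric.ball 0 1) := hpow.smul hΦ
  rw [← integral_boundaryValue h, fourierCoeff]
  simp only [boundaryValue_apply, neg_neg, fourier_eq_toCircle_zpow, zpow_natCast, smul_eq_mul]

theorem fourierCoeff_boundaryValue_zero (hΦ : DiffContOnCl ℂ Φ (Metric.ball 0 1)) :
    fourierCoeff (boundaryValue hΦ) 0 = Φ 0 := by
  simpa using fourierCoeff_boundaryValue_neg hΦ 0

theorem isHardy_boundaryValue (hΦ : DiffContOnCl ℂ Φ (Metric.ball 0 1)) :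
    IsHardy (boundaryValue hΦ) := by
  intro n hn
  obtain ⟨m, rfl⟩ : ∃ m : ℕ, n = -((m + 1 : ℕ) : ℤ) := ⟨(-n).toNat - 1, by omega⟩
  rw [fourierCoeff_boundaryValue_neg, zero_pow m.succ_ne_zero, zero_mul]

theorem diffContOnCl_tsum_pow {γ : ℕ → ℂ} (hγ : Summable fun k => ‖γ k‖) :
    DiffContOnCl ℂ (fun z => ∑' k, γ k * z ^ k) (Metric.ball 0 1) := by
  have hle (k : ℕ) (z : ℂ) (hz : z ∈ Metric.closedBall (0 : ℂ) 1) : ‖γ k * z ^ k‖ ≤ ‖γ k‖ := by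
    rw [norm_mul, norm_pow]
    exact mul_le_of_le_one_right (norm_nonneg _)
      (pow_le_one₀ (norm_nonneg _) (mem_closedBall_zero_iff.mp hz))
  refine ⟨Complex.differentiableOn_tsum_of_summable_norm hγ (fun k => by fun_prop)
    Metric.isOpen_ball fun k z hz => hle k z (Metric.ball_subset_closedBall hz), ?_⟩
  rw [closure_ball _ one_ne_zero]
  exact continuousOn_tsum (fun k => by fun_prop) hγ hle

end DiskAlgebra

section MultiplicationOperators

variable {α : Type*} [MeasurableSpace α] {μ : Measure α}

/-- Multiplication by an essentially bounded function, as an operator on `L²`. -/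
def mulLp (m : Lp ℂ ⊤ μ) : Lp ℂ 2 μ →L[ℂ] Lp ℂ 2 μ :=
  (ContinuousLinearMap.mul ℂ ℂ).holderL μ ⊤ 2 2 m

theorem mulLp_ae (m : Lp ℂ ⊤ μ) (v : Lp ℂ 2 μ) : mulLp m v =ᵐ[μ] fun t => m t * v t :=
  (ContinuousLinearMap.mul ℂ ℂ).coeFn_holder (r := 2) m v

variable [TopologicalSpace α] [CompactSpace α] [BorelSpace α] [IsFiniteMeasure μ]

theorem mulLp_toLp_ae (f : C(α, ℂ)) (v : Lp ℂ 2 μ) :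
    mulLp (ContinuousMap.toLp ⊤ μ ℂ f) v =ᵐ[μ] fun t => f t * v t := by
  filter_upwards [mulLp_ae (ContinuousMap.toLp ⊤ μ ℂ f) v,
    ContinuousMap.coeFn_toLp (p := ⊤) (𝕜 := ℂ) μ f] with t h₁ h₂
  rw [h₁, h₂]

/-- The representation of the continuous functions by multiplication operators on `L²`. -/
def mulC : C(α, ℂ) →* (Lp ℂ 2 μ →L[ℂ] Lp ℂ 2 μ) where
  toFun f := mulLp (ContinuousMap.toLp ⊤ μ ℂ f)
  map_one' := by
    ext1 v
    apply Lp.ext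
    filter_upwards [mulLp_toLp_ae 1 v] with t ht
    rw [ht, ContinuousMap.one_apply, one_mul, one_apply_eq_self]
  map_mul' f g := by
    ext1 v
    apply Lp.ext
    filter_upwards [mulLp_toLp_ae (f * g) v, mulLp_toLp_ae g v,
      mulLp_toLp_ae f (mulLp (ContinuousMap.toLp ⊤ μ ℂ g) v)] with t h₁ h₂ h₃
    rw [h₁, mul_apply_eq_comp, h₃, h₂, ContinuousMap.mul_apply, mul_assoc]

theorem mulC_ae (f : C(α, ℂ)) (v : Lp ℂ 2 μ) : mulC f v =ᵐ[μ] fun t => f t * v t :=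
  mulLp_toLp_ae f v

end MultiplicationOperators

section Flips

/-- The flip `v ↦ t⁻¹ v(t⁻¹)`, which interchanges the Hardy space and its orthogonal complement. -/
def hardyFlip : L2T →L[ℂ] L2T :=
  mulC (fourier (-1)) ∘L (Lp.compMeasurePreservingₗᵢ ℂ (fun t : Circ => -t)
    (Measure.measurePreserving_neg haar)).toContinuousLinearMap

theorem hardyFlip_ae (v : L2T) : hardyFlip v =ᵐ[haar] fun t => fourier (-1) t * v (-t) := by
  filter_upwards [mulC_ae (μ := haar) (fourier (-1)) _,
    Lp.coeFn_compMeasurePreserving v (Measure.measurePreserving_neg haar)] with t h₁ h₂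
  exact h₁.trans (congrArg _ h₂)

/-- The symmetry `v ↦ χ(t) t⁻¹ v(t⁻¹)`. -/
def chiFlip : L2T →L[ℂ] L2T :=
  mulLp (memLp_chiCirc.toLp chiCirc) ∘L hardyFlip

theorem chiFlip_ae (v : L2T) :
    chiFlip v =ᵐ[haar] fun t => chiCirc t * (fourier (-1) t * v (-t)) := by
  filter_upwards [mulLp_ae (memLp_chiCirc.toLp chiCirc) (hardyFlip v), memLp_chiCirc.coeFn_toLp,
    hardyFlip_ae v] with t h₁ h₂ h₃
  rw [← h₂, ← h₃]
  exact h₁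

theorem fourier_neg_apply_mul_cancel (t : Circ) : fourier (-1) t * fourier (-1) (-t) = 1 := by
  rw [fourier_eq_toCircle_zpow, fourier_eq_toCircle_zpow, coe_toCircle_neg, inv_zpow]
  exact mul_inv_cancel₀ (zpow_ne_zero _ (Circle.coe_ne_zero _))

theorem chiFlip_hardyFlip (v : L2T) : chiFlip (hardyFlip v) = -hardyFlip (chiFlip v) := by
  apply Lp.ext
  filter_upwards [chiFlip_ae (hardyFlip v), ae_comp_neg (hardyFlip_ae v), hardyFlip_ae (chiFlip v),
    ae_comp_neg (chiFlip_ae v), ae_im_toCircle_ne_zero, Lp.coeFn_neg (hardyFlip (chiFlip v))]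
    with t h₁ h₂ h₃ h₄ h₅ h₆
  rw [h₆, Pi.neg_apply, h₁, h₂, h₃, h₄, chiCirc_neg h₅]
  ring

theorem hardyFlip_hardyFlip (v : L2T) : hardyFlip (hardyFlip v) = v := by
  apply Lp.ext
  filter_upwards [hardyFlip_ae (hardyFlip v), ae_comp_neg (hardyFlip_ae v)] with t h₁ h₂
  rw [h₁, h₂, neg_neg, ← mul_assoc, fourier_neg_apply_mul_cancel, one_mul]

theorem chiFlip_chiFlip (v : L2T) : chiFlip (chiFlip v) = v := by
  apply Lp.ext
  filter_upwards [chiFlip_ae (chiFlip v), ae_comp_neg (chiFlip_ae v), ae_im_toCircle_ne_zero]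
    with t h₁ h₂ h₃
  rw [h₁, h₂, neg_neg, chiCirc_neg h₃]
  linear_combination -(fourier (-1) t * fourier (-1) (-t) * v t) * chiCirc_mul_self t
    + v t * fourier_neg_apply_mul_cancel t

theorem chiFlip_mulC (f : C(Circ, ℂ)) (v : L2T) :
    chiFlip (mulC f v) = mulC (reflect f) (chiFlip v) := by
  apply Lp.ext
  filter_upwards [chiFlip_ae (mulC f v), ae_comp_neg (mulC_ae f v), chiFlip_ae v,
    mulC_ae (reflect f) (chiFlip v)] with t h₁ h₂ h₃ h₄
  rw [h₁, h₂, h₄, h₃, reflect_apply]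
  ring

theorem inner_eq_integral (v w : L2T) :
    ⟪v, w⟫_ℂ = ∫ t, (starRingEnd ℂ) (v t) * w t ∂haar := by
  rw [L2.inner_def]
  simp only [RCLike.inner_apply, mul_comm]

theorem inner_chiFlip_left (v w : L2T) : ⟪chiFlip v, w⟫_ℂ = ⟪v, chiFlip w⟫_ℂ := by
  rw [inner_eq_integral, inner_eq_integral,
    ← integral_neg_eq_self (fun t => (starRingEnd ℂ) (chiFlip v t) * w t)]
  apply integral_congr_ae
  filter_upwards [chiFlip_ae w, ae_comp_neg (chiFlip_ae v), ae_im_toCircle_ne_zero]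
    with t h₁ h₂ h₃
  have hconj : (starRingEnd ℂ) (fourier (-1) (-t)) = fourier (-1) t := by
    rw [← fourier_neg, fourier_apply, fourier_apply, neg_neg, one_smul, neg_one_smul]
  rw [h₁, h₂, neg_neg, chiCirc_neg h₃, map_mul, map_mul, map_neg, conj_chiCirc, hconj]
  ring

theorem fourierCoeff_hardyFlip (v : L2T) (n : ℤ) :
    fourierCoeff (hardyFlip v) n = fourierCoeff v (-1 - n) := by
  rw [fourierCoeff_congr_ae (hardyFlip_ae v), fourierCoeff_fourier_mul, fourierCoeff_comp_neg]
  congr 1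
  ring

end Flips

section HardySpace

/-- The embedding of `ℓ²(ℕ)` in `L²` of the circle that sends `e_k` to `t^k`; its range is the
Hardy space. -/
def hardyEmb : l2 →L[ℂ] L2T :=
  ((orthonormal_fourier (T := 2 * Real.pi)).comp (Nat.cast : ℕ → ℤ)
    Nat.cast_injective).orthogonalFamily.linearIsometry.toContinuousLinearMap

/-- The map `L² → ℓ²(ℕ)` of Fourier coefficients of nonnegative index, the adjoint of
`hardyEmb`. -/
def hardyProj : L2T →L[ℂ] l2 :=
  ContinuousLinearMap.adjoint hardyEmb

theorem hardyEmb_ee (k : ℕ) : hardyEmb (ee k) = fourierLp 2 (k : ℤ) := by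
  refine (((orthonormal_fourier (T := 2 * Real.pi)).comp (Nat.cast : ℕ → ℤ)
    Nat.cast_injective).orthogonalFamily.linearIsometry_apply_single (i := k) (1 : ℂ)).trans ?_
  simp

theorem hardyEmb_ee_ae (k : ℕ) : hardyEmb (ee k) =ᵐ[haar] fourier (k : ℤ) := by
  rw [hardyEmb_ee]
  exact coeFn_fourierLp 2 (k : ℤ)

theorem hardyProj_hardyEmb (x : l2) : hardyProj (hardyEmb x) = x := by
  refine ext_inner_left ℂ fun y => ?_
  rw [hardyProj, ContinuousLinearMap.adjoint_inner_right]
  exact LinearIsometry.inner_map_map _ y x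

theorem inner_ee_hardyProj (j : ℕ) (v : L2T) : ⟪ee j, hardyProj v⟫_ℂ = fourierCoeff v j := by
  rw [hardyProj, ContinuousLinearMap.adjoint_inner_right, hardyEmb_ee, inner_fourierLp]

theorem hardyProj_fourierLp_of_neg {n : ℤ} (hn : n < 0) : hardyProj (fourierLp 2 n) = 0 := by
  refine ext_inner_ee fun j => ?_
  rw [hardyProj, ContinuousLinearMap.adjoint_inner_right, hardyEmb_ee, inner_zero_right]
  exact orthonormal_fourier.2 (by omega)

theorem isHardy_hardyEmb (x : l2) : IsHardy (hardyEmb x) := by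
  intro n hn
  rw [← inner_fourierLp, ← ContinuousLinearMap.adjoint_inner_left, ← hardyProj,
    hardyProj_fourierLp_of_neg hn, inner_zero_left]

theorem hardyEmb_hardyProj {v : L2T} (hv : IsHardy v) : hardyEmb (hardyProj v) = v := by
  refine ext_fourierCoeff fun n => ?_
  rcases lt_or_ge n 0 with hn | hn
  · rw [isHardy_hardyEmb _ n hn, hv n hn]
  · lift n to ℕ using hn
    rw [← inner_ee_hardyProj, hardyProj_hardyEmb, inner_ee_hardyProj]

theorem fourierCoeff_mulC_fourierLp (f : C(Circ, ℂ)) (m n : ℤ) :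
    fourierCoeff (mulC f (fourierLp 2 m : L2T)) n = fourierCoeff f (n - m) := by
  rw [← fourierCoeff_fourier_mul]
  refine congrFun (fourierCoeff_congr_ae ?_) n
  filter_upwards [mulC_ae f (fourierLp 2 m : L2T), coeFn_fourierLp 2 m] with t h₁ h₂
  rw [h₁, h₂, mul_comm]

end HardySpace

section ToeplitzHankel

/-- The Toeplitz operator with symbol `f`. -/
def toeplitz (f : C(Circ, ℂ)) : l2 →L[ℂ] l2 :=
  hardyProj ∘L mulC f ∘L hardyEmb

theorem ent_toeplitz (f : C(Circ, ℂ)) (j k : ℕ) :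
    ent (toeplitz f) j k = fourierCoeff f (j - k) := by
  rw [← fourierCoeff_mulC_fourierLp, ← hardyEmb_ee]
  exact inner_ee_hardyProj j _

theorem hardyEmb_comp_toeplitz {f : C(Circ, ℂ)} (hf : IsHardy f) :
    hardyEmb ∘L toeplitz f = mulC f ∘L hardyEmb := by
  refine ext_ee fun k => hardyEmb_hardyProj fun n hn => ?_
  change fourierCoeff (mulC f (hardyEmb (ee k))) n = 0
  rw [hardyEmb_ee, fourierCoeff_mulC_fourierLp]
  exact hf _ (by omega)

theorem toeplitz_comp_hardyProj {f : C(Circ, ℂ)} (hf : IsHardy f) :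
    toeplitz (reflect f) ∘L hardyProj = hardyProj ∘L mulC (reflect f) := by
  have hspan := (fourierBasis (T := 2 * Real.pi)).dense_span
  rw [coe_fourierBasis] at hspan
  refine ContinuousLinearMap.ext_on
    (Submodule.dense_iff_topologicalClosure_eq_top.mpr hspan) ?_
  rintro _ ⟨n, rfl⟩
  simp only [ContinuousLinearMap.comp_apply]
  rcases lt_or_ge n 0 with hn | hn
  · rw [hardyProj_fourierLp_of_neg hn, map_zero]
    refine (ext_inner_ee fun j => ?_).symm
    rw [inner_ee_hardyProj, fourierCoeff_mulC_fourierLp, fourierCoeff_reflect, inner_zero_right]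
    exact hf _ (by omega)
  · lift n to ℕ using hn
    rw [← hardyEmb_ee, hardyProj_hardyEmb]
    rfl

theorem toeplitz_one : toeplitz 1 = 1 := by
  ext1 x
  simp only [toeplitz, map_one, ContinuousLinearMap.comp_apply, one_apply_eq_self,
    hardyProj_hardyEmb]

theorem toeplitz_mul_of_isHardy (f : C(Circ, ℂ)) {g : C(Circ, ℂ)} (hg : IsHardy g) :
    toeplitz f * toeplitz g = toeplitz (f * g) := by
  ext1 x
  have h := DFunLike.congr_fun (hardyEmb_comp_toeplitz hg) x
  simp only [ContinuousLinearMap.comp_apply] at h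
  simp only [mul_apply_eq_comp, toeplitz, map_mul, ContinuousLinearMap.comp_apply] at h ⊢
  rw [h]

theorem toeplitz_reflect_mul {f : C(Circ, ℂ)} (hf : IsHardy f) (g : C(Circ, ℂ)) :
    toeplitz (reflect f) * toeplitz g = toeplitz (reflect f * g) := by
  ext1 x
  have h := DFunLike.congr_fun (toeplitz_comp_hardyProj hf) (mulC g (hardyEmb x))
  simp only [mul_apply_eq_comp, toeplitz, map_mul, ContinuousLinearMap.comp_apply] at h ⊢
  rw [h]

theorem isUnitUpperTriangular_toeplitz_transpose {f : C(Circ, ℂ)} (hf : IsHardy f)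
    (h0 : fourierCoeff f 0 = 1) : IsUnitUpperTriangular (entMatrix (toeplitz f)).transpose := by
  refine ⟨fun j k hjk => (ent_toeplitz f k j).trans (hf _ ?_), fun j => ?_⟩
  · have hkj : k < j := hjk
    omega
  · exact (ent_toeplitz f j j).trans (by rwa [sub_self])

theorem isUnitUpperTriangular_toeplitz_reflect {f : C(Circ, ℂ)} (hf : IsHardy f)
    (h0 : fourierCoeff f 0 = 1) : IsUnitUpperTriangular (entMatrix (toeplitz (reflect f))) := by
  refine ⟨fun j k hjk => (ent_toeplitz _ j k).trans ?_, fun j => (ent_toeplitz _ j j).trans ?_⟩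
  · have hkj : k < j := hjk
    rw [fourierCoeff_reflect]
    exact hf _ (by omega)
  · rwa [sub_self, fourierCoeff_reflect, neg_zero]

/-- The Toeplitz operator with symbol `a` as a unit, when `a` and `a⁻¹` have analytic
extensions. -/
def toeplitzUnit (a : C(Circ, ℂ)ˣ) (ha : IsHardy a.val) (ha' : IsHardy a⁻¹.val) :
    (l2 →L[ℂ] l2)ˣ where
  val := toeplitz a
  inv := toeplitz ↑a⁻¹
  val_inv := by rw [toeplitz_mul_of_isHardy _ ha', Units.mul_inv, toeplitz_one]
  inv_val := by rw [toeplitz_mul_of_isHardy _ ha, Units.inv_mul, toeplitz_one]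

/-- The Toeplitz operator with symbol `a(t⁻¹)` as a unit, when `a` and `a⁻¹` have analytic
extensions. -/
def toeplitzReflectUnit (a : C(Circ, ℂ)ˣ) (ha : IsHardy a.val) (ha' : IsHardy a⁻¹.val) :
    (l2 →L[ℂ] l2)ˣ where
  val := toeplitz (reflect a)
  inv := toeplitz (reflect ↑a⁻¹)
  val_inv := by rw [toeplitz_reflect_mul ha, ← map_mul, Units.mul_inv, map_one, toeplitz_one]
  inv_val := by rw [toeplitz_reflect_mul ha', ← map_mul, Units.inv_mul, map_one, toeplitz_one]

/-- The Hankel operator with symbol `f χ`. -/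
def chiHankel (f : C(Circ, ℂ)) : l2 →L[ℂ] l2 :=
  hardyProj ∘L mulC f ∘L chiFlip ∘L hardyEmb

theorem ent_chiHankel (f : C(Circ, ℂ)) (j k : ℕ) :
    ent (chiHankel f) j k = fourierCoeff (fun t => f t * chiCirc t) (j + k + 1) := by
  have hae : mulC f (chiFlip (hardyEmb (ee k)))
      =ᵐ[haar] fun t => fourier (-1 - k) t * (f t * chiCirc t) := by
    filter_upwards [mulC_ae f (chiFlip (hardyEmb (ee k))), chiFlip_ae (hardyEmb (ee k)),
      ae_comp_neg (hardyEmb_ee_ae k)] with t h₁ h₂ h₃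
    have hk : fourier k (-t) = fourier (-k) t := by
      rw [fourier_apply, fourier_apply, neg_smul, smul_neg]
    rw [h₁, h₂, h₃, hk, sub_eq_add_neg, fourier_add]
    ring
  refine (inner_ee_hardyProj j (mulC f (chiFlip (hardyEmb (ee k))))).trans ?_
  rw [fourierCoeff_congr_ae hae, fourierCoeff_fourier_mul]
  congr 1
  ring

theorem one_add_chiHankel (f : C(Circ, ℂ)) :
    1 + chiHankel f = hardyProj ∘L (1 + mulC f ∘L chiFlip) ∘L hardyEmb := by
  ext1 x
  simp only [chiHankel, add_apply, one_apply_eq_self, ContinuousLinearMap.comp_apply, map_add,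
    hardyProj_hardyEmb]

end ToeplitzHankel

section ChiCoefficients

theorem integral_chi_mul {f : ℝ → ℂ} (hf : Continuous f) :
    ∫ θ in (0:ℝ)..(2 * Real.pi), chi θ * f θ
      = Complex.I * ((∫ θ in (0:ℝ)..Real.pi, f θ) - ∫ θ in Real.pi..(2 * Real.pi), f θ) := by
  have hle : (0 : ℝ) ≤ Real.pi := Real.pi_pos.le
  have hle' : Real.pi ≤ 2 * Real.pi := by linarith
  have hupper : Set.EqOn (fun θ => chi θ * f θ) (fun θ => Complex.I * f θ)
      (Set.Ioo 0 Real.pi) := fun θ hθ => by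
    simp only [chi, Real.sin_pos_of_pos_of_lt_pi hθ.1 hθ.2, if_true]
  have hlower : Set.EqOn (fun θ => chi θ * f θ) (fun θ => -Complex.I * f θ)
      (Set.Ioo Real.pi (2 * Real.pi)) := fun θ hθ => by
    have hsin : Real.sin θ < 0 := by
      rw [← Real.sin_sub_two_pi]
      exact Real.sin_neg_of_neg_of_neg_pi_lt (by linarith [hθ.2]) (by linarith [hθ.1])
    simp only [chi, hsin.not_gt, if_false]
  have hint : IntervalIntegrable (fun θ => chi θ * f θ) volume 0 Real.pi :=
    (intervalIntegrable_congr_uIoo (by rwa [Set.uIoo_of_le hle])).mpr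
      ((continuous_const.mul hf).intervalIntegrable _ _)
  have hint' : IntervalIntegrable (fun θ => chi θ * f θ) volume Real.pi (2 * Real.pi) :=
    (intervalIntegrable_congr_uIoo (by rwa [Set.uIoo_of_le hle'])).mpr
      ((continuous_const.mul hf).intervalIntegrable _ _)
  rw [← intervalIntegral.integral_add_adjacent_intervals hint hint',
    intervalIntegral.integral_congr_Ioo_of_le hle hupper,
    intervalIntegral.integral_congr_Ioo_of_le hle' hlower,
    intervalIntegral.integral_const_mul, intervalIntegral.integral_const_mul]
  ring

theorem fc_chi_add_one (n : ℕ) :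
    fc chi (n + 1) = ((1 / Real.pi * ∫ x in (-1:ℝ)..1, x ^ n : ℝ) : ℂ) := by
  set a : ℂ := -(Complex.I * (n + 1)) with ha
  have hn : (n : ℂ) + 1 ≠ 0 := Nat.cast_add_one_ne_zero n
  have ha0 : a ≠ 0 := neg_ne_zero.mpr (mul_ne_zero Complex.I_ne_zero hn)
  have hexp (θ : ℝ) : Complex.exp (-(Complex.I * ((n + 1 : ℤ) : ℂ) * θ)) = Complex.exp (a * θ) := by
    rw [ha]
    push_cast
    ring_nf
  have hzero : Complex.exp (a * (0 : ℝ)) = 1 := by simp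
  have hpi : Complex.exp (a * Real.pi) = (-1) ^ (n + 1) := by
    rw [← Complex.exp_neg_pi_mul_I, ← Complex.exp_nat_mul, ha]
    push_cast
    ring_nf
  have htwo_pi : Complex.exp (a * (2 * Real.pi : ℝ)) = 1 :=
    Complex.exp_eq_one_iff.mpr ⟨-(n + 1), by rw [ha]; push_cast; ring⟩
  rw [fc]
  simp only [hexp]
  rw [integral_chi_mul (by fun_prop), integral_exp_mul_complex ha0, integral_exp_mul_complex ha0,
    hzero, hpi, htwo_pi, integral_pow, ha]
  have hπ : (Real.pi : ℂ) ≠ 0 := Complex.ofReal_ne_zero.mpr Real.pi_ne_zero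
  have hI := Complex.I_ne_zero
  push_cast
  field_simp
  ring

/-- The measure `dx/π` on `[-1,1]`, whose moments are the Fourier coefficients of `χ`. -/
def chiMeasure : Measure ℝ :=
  ENNReal.ofReal (1 / Real.pi) • volume.restrict (Set.Ioc (-1) 1)

theorem integral_pow_chiMeasure (n : ℕ) :
    ∫ x, x ^ n ∂chiMeasure = 1 / Real.pi * ∫ x in (-1:ℝ)..1, x ^ n := by
  rw [chiMeasure, integral_smul_measure, ENNReal.toReal_ofReal (by positivity), smul_eq_mul,
    intervalIntegral.integral_of_le (by norm_num)]

theorem integrable_pow_chiMeasure (n : ℕ) : Integrable (fun x : ℝ => x ^ n) chiMeasure :=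
  ((continuous_pow n).intervalIntegrable (-1) 1).1.smul_measure ENNReal.ofReal_ne_top

theorem ent_chiHankel_one (j k : ℕ) :
    ent (chiHankel 1) j k = ((∫ x, x ^ (j + k) ∂chiMeasure : ℝ) : ℂ) := by
  rw [integral_pow_chiMeasure, ← fc_chi_add_one, ent_chiHankel,
    fourierCoeff_eq_fc fun θ => (one_mul _).trans (chiCirc_coe θ), Nat.cast_add]

theorem isUnit_one_add_chiHankel_one : IsUnit (1 + chiHankel 1) :=
  isUnit_one_add_of_re_inner_nonneg
    (re_inner_nonneg_of_ent_eq_moment integrable_pow_chiMeasure ent_chiHankel_one)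

/-- The operator `1 + H(χ)` as a unit. -/
def oneAddChiHankel : (l2 →L[ℂ] l2)ˣ :=
  isUnit_one_add_chiHankel_one.unit

theorem coe_oneAddChiHankel :
    (oneAddChiHankel : l2 →L[ℂ] l2) = hardyProj ∘L (1 + chiFlip) ∘L hardyEmb := by
  rw [oneAddChiHankel, IsUnit.unit_spec, one_add_chiHankel, map_one]
  rfl

end ChiCoefficients

section EvenCompression

theorem eq_zero_of_chiFlip_eq_of_hardyProj_eq_zero {w : L2T} (hw : chiFlip w = w)
    (h0 : hardyProj w = 0) : w = 0 := by
  have hflip : hardyEmb (hardyProj (hardyFlip w)) = hardyFlip w := by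
    refine hardyEmb_hardyProj fun n hn => ?_
    obtain ⟨m, hm⟩ : ∃ m : ℕ, -1 - n = m := ⟨(-1 - n).toNat, by omega⟩
    rw [fourierCoeff_hardyFlip, hm, ← inner_ee_hardyProj, h0, inner_zero_right]
  have hker : oneAddChiHankel.val (hardyProj (hardyFlip w)) = 0 := by
    simp only [coe_oneAddChiHankel, ContinuousLinearMap.comp_apply, hflip, add_apply,
      one_apply_eq_self, chiFlip_hardyFlip, hw, add_neg_cancel, map_zero]
  have hproj : hardyProj (hardyFlip w) = 0 := by
    have h := DFunLike.congr_fun oneAddChiHankel.inv_mul (hardyProj (hardyFlip w))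
    rwa [mul_apply_eq_comp, hker, map_zero, one_apply_eq_self, eq_comm] at h
  rw [← hardyFlip_hardyFlip w, ← hflip, hproj, map_zero, map_zero]

/-- The `chiFlip`-invariant vector whose image under `hardyProj` is given. -/
def symExt : l2 →L[ℂ] L2T :=
  (1 + chiFlip) ∘L hardyEmb ∘L ↑oneAddChiHankel⁻¹

theorem symExt_comp_oneAddChiHankel :
    symExt ∘L ↑oneAddChiHankel = (1 + chiFlip) ∘L hardyEmb := by
  ext1 x
  have h := DFunLike.congr_fun oneAddChiHankel.inv_mul x
  exact congrArg (fun y => (1 + chiFlip) (hardyEmb y)) h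

theorem hardyProj_symExt (x : l2) : hardyProj (symExt x) = x := by
  have h := DFunLike.congr_fun oneAddChiHankel.mul_inv x
  rwa [coe_oneAddChiHankel] at h

theorem chiFlip_symExt (x : l2) : chiFlip (symExt x) = symExt x := by
  simp only [symExt, ContinuousLinearMap.comp_apply, add_apply, one_apply_eq_self, map_add,
    chiFlip_chiFlip, add_comm]

theorem symExt_hardyProj {v : L2T} (hv : chiFlip v = v) : symExt (hardyProj v) = v := by
  rw [← sub_eq_zero]
  apply eq_zero_of_chiFlip_eq_of_hardyProj_eq_zero
  · rw [map_sub, chiFlip_symExt, hv]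
  · rw [map_sub, hardyProj_symExt, sub_self]

theorem two_mul_inner_hardyProj {v w : L2T} (hv : chiFlip v = v) (hw : chiFlip w = w) :
    2 * ⟪hardyProj v, (oneAddChiHankel⁻¹).val (hardyProj w)⟫_ℂ = ⟪v, w⟫_ℂ := by
  set y := (oneAddChiHankel⁻¹).val (hardyProj w)
  have hy : hardyEmb y + chiFlip (hardyEmb y) = w := symExt_hardyProj hw
  rw [← hy, inner_add_right, ← inner_chiFlip_left, hv, hardyProj,
    ContinuousLinearMap.adjoint_inner_left]
  ring

/-- Multiplication by `f`, compressed to the `chiFlip`-invariant vectors and transported to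
`ℓ²(ℕ)`. Even symbols preserve those vectors. -/
def evenCompression (f : C(Circ, ℂ)) : l2 →L[ℂ] l2 :=
  hardyProj ∘L mulC f ∘L symExt

theorem evenCompression_hardyProj (f : C(Circ, ℂ)) {v : L2T} (hv : chiFlip v = v) :
    evenCompression f (hardyProj v) = hardyProj (mulC f v) := by
  simp only [evenCompression, ContinuousLinearMap.comp_apply, symExt_hardyProj hv]

theorem evenCompression_one : evenCompression 1 = 1 := by
  ext1 x
  simp only [evenCompression, map_one, ContinuousLinearMap.comp_apply, one_apply_eq_self,
    hardyProj_symExt]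

theorem chiFlip_mulC_of_reflect_eq {f : C(Circ, ℂ)} (hf : reflect f = f) {v : L2T}
    (hv : chiFlip v = v) : chiFlip (mulC f v) = mulC f v := by
  rw [chiFlip_mulC, hf, hv]

theorem evenCompression_mul (f : C(Circ, ℂ)) {g : C(Circ, ℂ)} (hg : reflect g = g) :
    evenCompression f * evenCompression g = evenCompression (f * g) := by
  ext1 x
  have hfix := chiFlip_mulC_of_reflect_eq hg (chiFlip_symExt x)
  simp only [mul_apply_eq_comp, evenCompression, ContinuousLinearMap.comp_apply,
    symExt_hardyProj hfix, map_mul]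

/-- The even compression of a unit as a unit. -/
def evenCompressionUnit (f : C(Circ, ℂ)ˣ) (hf : Units.map reflect f = f) :
    (l2 →L[ℂ] l2)ˣ where
  val := evenCompression f
  inv := evenCompression ↑f⁻¹
  val_inv := by
    have hf' : reflect ↑f⁻¹ = (↑f⁻¹ : C(Circ, ℂ)) :=
      congrArg Units.val ((map_inv (Units.map reflect) f).trans (congrArg _ hf))
    rw [evenCompression_mul _ hf', Units.mul_inv, evenCompression_one]
  inv_val := by
    rw [evenCompression_mul _ (congrArg Units.val hf), Units.inv_mul, evenCompression_one]

end EvenCompression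

section Factorization

variable (a : C(Circ, ℂ)ˣ)

theorem map_reflect_mul_map_reflect :
    Units.map reflect (a * Units.map reflect a) = a * Units.map reflect a := by
  ext t
  simp [reflect_reflect, mul_comm]

theorem one_add_chiHankel_eq_mul (ha : IsHardy a.val) :
    1 + chiHankel (reflect a * ↑a⁻¹)
      = toeplitz (reflect a) * evenCompression ↑(a * Units.map reflect a)⁻¹ * oneAddChiHankel
        * toeplitz a := by
  have hsymb : reflect a * ↑(a * Units.map reflect a)⁻¹ = (↑a⁻¹ : C(Circ, ℂ)) := by
    rw [mul_inv, Units.val_mul, mul_left_comm]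
    exact (congrArg _ (Units.map reflect a).mul_inv).trans (mul_one _)
  have hsymExt (x : l2) : symExt (oneAddChiHankel.val (toeplitz a x))
      = mulC a (hardyEmb x) + mulC (reflect a) (chiFlip (hardyEmb x)) := by
    have hE := DFunLike.congr_fun symExt_comp_oneAddChiHankel (toeplitz a x)
    have hT := DFunLike.congr_fun (hardyEmb_comp_toeplitz ha) x
    simp only [ContinuousLinearMap.comp_apply, add_apply, one_apply_eq_self] at hE hT
    rw [hE, hT, chiFlip_mulC]
  ext1 x
  symm
  calc toeplitz (reflect a) (evenCompression ↑(a * Units.map reflect a)⁻¹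
        (oneAddChiHankel.val (toeplitz a x)))
      = hardyProj (mulC (reflect a) (mulC ↑(a * Units.map reflect a)⁻¹
          (symExt (oneAddChiHankel.val (toeplitz a x))))) :=
        DFunLike.congr_fun (toeplitz_comp_hardyProj ha) _
    _ = hardyProj (mulC ↑a⁻¹
          (mulC a (hardyEmb x) + mulC (reflect a) (chiFlip (hardyEmb x)))) := by
        rw [hsymExt, ← mul_apply_eq_comp (mulC (reflect a)), ← map_mul, hsymb]
    _ = hardyProj (hardyEmb x + mulC (reflect a * ↑a⁻¹) (chiFlip (hardyEmb x))) := by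
        rw [map_add, ← mul_apply_eq_comp, ← mul_apply_eq_comp, ← map_mul, ← map_mul,
          Units.inv_mul, map_one, one_apply_eq_self, mul_comm (reflect _)]
    _ = (1 + chiHankel (reflect a * ↑a⁻¹)) x := by
        rw [one_add_chiHankel]
        rfl

/-- The operator `1 + H(ψ)` with `ψ(t) = a(t⁻¹) a(t)⁻¹ χ(t)` as a unit, when `a` and `a⁻¹` have
analytic extensions. -/
def oneAddChiHankelUnit (ha : IsHardy a.val) (ha' : IsHardy a⁻¹.val) : (l2 →L[ℂ] l2)ˣ :=
  toeplitzReflectUnit a ha ha'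
    * (evenCompressionUnit (a * Units.map reflect a) (map_reflect_mul_map_reflect a))⁻¹
    * oneAddChiHankel * toeplitzUnit a ha ha'

theorem coe_oneAddChiHankelUnit (ha : IsHardy a.val) (ha' : IsHardy a⁻¹.val) :
    (oneAddChiHankelUnit a ha ha').val = 1 + chiHankel (reflect a * ↑a⁻¹) :=
  (one_add_chiHankel_eq_mul a ha).symm

theorem toeplitz_mul_inv_mul_toeplitz (ha : IsHardy a.val) (ha' : IsHardy a⁻¹.val) :
    toeplitz a * ↑(oneAddChiHankelUnit a ha ha')⁻¹ * toeplitz (reflect a)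
      = ↑oneAddChiHankel⁻¹ * evenCompression (a * reflect a) := by
  have h : toeplitzUnit a ha ha' * (oneAddChiHankelUnit a ha ha')⁻¹ * toeplitzReflectUnit a ha ha'
      = oneAddChiHankel⁻¹
        * evenCompressionUnit (a * Units.map reflect a) (map_reflect_mul_map_reflect a) := by
    rw [oneAddChiHankelUnit]
    group
  exact congrArg Units.val h

theorem det_finiteSection_inv (ha : IsHardy a.val) (ha' : IsHardy a⁻¹.val)
    (h0 : fourierCoeff a.val 0 = 1) (n : ℕ) :
    (finiteSection n (entMatrix ↑(oneAddChiHankelUnit a ha ha')⁻¹)).det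
      = (finiteSection n
          (entMatrix (↑oneAddChiHankel⁻¹ * evenCompression (a * reflect a)))).det := by
  rw [← toeplitz_mul_inv_mul_toeplitz a ha ha',
    det_finiteSection_mul_mul (isUnitUpperTriangular_toeplitz_transpose ha h0)
      (isUnitUpperTriangular_toeplitz_reflect ha h0)]

end Factorization

section SquareRoot

/-- The square root `(1 - z²)^{1/2}` on the unit disk, with value `1` at the origin. -/
def sqrtOneSubSq (z : ℂ) : ℂ :=
  (1 - z ^ 2) ^ (2⁻¹ : ℂ)

theorem sqrtOneSubSq_sq (z : ℂ) : sqrtOneSubSq z ^ 2 = 1 - z ^ 2 :=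
  Complex.cpow_nat_inv_pow _ two_ne_zero

theorem sqrtOneSubSq_zero : sqrtOneSubSq 0 = 1 := by
  simp [sqrtOneSubSq]

theorem re_one_sub_sq_nonneg {z : ℂ} (hz : ‖z‖ ≤ 1) : 0 ≤ (1 - z ^ 2).re := by
  have h := Complex.re_le_norm (z ^ 2)
  have hle := pow_le_one₀ (norm_nonneg z) hz (n := 2)
  rw [norm_pow] at h
  rw [Complex.sub_re, Complex.one_re]
  linarith

theorem re_one_sub_sq_pos {z : ℂ} (hz : ‖z‖ < 1) : 0 < (1 - z ^ 2).re := by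
  have h := Complex.re_le_norm (z ^ 2)
  have hlt := pow_lt_one₀ (norm_nonneg z) hz two_ne_zero
  rw [norm_pow] at h
  rw [Complex.sub_re, Complex.one_re]
  linarith

theorem diffContOnCl_sqrtOneSubSq : DiffContOnCl ℂ sqrtOneSubSq (Metric.ball 0 1) := by
  refine ⟨DifferentiableOn.cpow_const (by fun_prop) fun z hz =>
    Or.inl (re_one_sub_sq_pos (mem_ball_zero_iff.mp hz)), ?_⟩
  rw [closure_ball _ one_ne_zero]
  intro z hz
  have hre := re_one_sub_sq_nonneg (mem_closedBall_zero_iff.mp hz)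
  have hcpow : ContinuousAt (fun w : ℂ => w ^ (2⁻¹ : ℂ)) (1 - z ^ 2) :=
    Complex.continuousAt_cpow_const_of_re_pos (Or.inl hre) (by norm_num)
  exact (hcpow.comp (f := fun z : ℂ => 1 - z ^ 2) (by fun_prop)).continuousWithinAt

theorem sqrtOneSubSq_conj {z : ℂ} (hz : ‖z‖ ≤ 1) :
    sqrtOneSubSq ((starRingEnd ℂ) z) = (starRingEnd ℂ) (sqrtOneSubSq z) := by
  have harg : (1 - z ^ 2).arg ≠ Real.pi := fun h =>
    (Complex.arg_eq_pi_iff.mp h).1.not_ge (re_one_sub_sq_nonneg hz)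
  have h := Complex.conj_cpow (1 - z ^ 2) 2⁻¹ harg
  rw [map_inv₀, map_ofNat, map_sub, map_one, map_pow] at h
  exact h

theorem sqrtOneSubSq_coe_inv (z : Circle) :
    sqrtOneSubSq (z : ℂ)⁻¹ = (starRingEnd ℂ) (sqrtOneSubSq z) := by
  rw [← sqrtOneSubSq_conj (Circle.norm_coe z).le, ← Circle.coe_inv, Circle.coe_inv_eq_conj]

theorem coe_inv_sub_coe (z : Circle) : (z : ℂ)⁻¹ - z = -(2 * Complex.I * (z : ℂ).im) := by
  rw [← Circle.coe_inv, Circle.coe_inv_eq_conj, ← neg_sub, Complex.sub_conj]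
  push_cast
  ring

theorem coe_inv_mul_sqrtOneSubSq_sq (z : Circle) :
    (z : ℂ)⁻¹ * sqrtOneSubSq z ^ 2 = -(2 * Complex.I * (z : ℂ).im) := by
  have hz := Circle.coe_ne_zero z
  rw [sqrtOneSubSq_sq, ← coe_inv_sub_coe]
  field_simp

theorem norm_sqrtOneSubSq_sq (z : Circle) : ‖sqrtOneSubSq z‖ ^ 2 = 2 * |(z : ℂ).im| := by
  have h := congrArg norm (coe_inv_mul_sqrtOneSubSq_sq z)
  simpa [Circle.norm_coe] using h

theorem conj_sqrtOneSubSq_mul_self (z : Circle) :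
    (starRingEnd ℂ) (sqrtOneSubSq z) * sqrtOneSubSq z = ((2 * |(z : ℂ).im| : ℝ) : ℂ) := by
  rw [Complex.conj_mul', ← Complex.ofReal_pow, norm_sqrtOneSubSq_sq]

theorem chiCirc_mul_im (t : Circ) :
    chiCirc t * (t.toCircle : ℂ).im = Complex.I * (|(t.toCircle : ℂ).im| : ℝ) := by
  unfold chiCirc
  split_ifs with h
  · rw [abs_of_pos h]
  · rw [abs_of_nonpos (not_lt.mp h), Complex.ofReal_neg, neg_mul, mul_neg]

theorem sqrtOneSubSq_toCircle_inv {t : Circ} (ht : (t.toCircle : ℂ).im ≠ 0) :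
    sqrtOneSubSq (t.toCircle : ℂ)⁻¹
      = chiCirc t * ((t.toCircle : ℂ)⁻¹ * sqrtOneSubSq t.toCircle) := by
  have hne : sqrtOneSubSq t.toCircle ≠ 0 := fun h => by
    have hnorm := norm_sqrtOneSubSq_sq t.toCircle
    rw [h] at hnorm
    simp [ht] at hnorm
  refine mul_right_cancel₀ hne ?_
  calc sqrtOneSubSq (t.toCircle : ℂ)⁻¹ * sqrtOneSubSq t.toCircle
      = ((2 * |(t.toCircle : ℂ).im| : ℝ) : ℂ) := by
        rw [sqrtOneSubSq_coe_inv, conj_sqrtOneSubSq_mul_self]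
    _ = -(2 * Complex.I * (chiCirc t * (t.toCircle : ℂ).im)) := by
        rw [chiCirc_mul_im]
        push_cast
        linear_combination 2 * ((|(t.toCircle : ℂ).im| : ℝ) : ℂ) * Complex.I_sq
    _ = chiCirc t * ((t.toCircle : ℂ)⁻¹ * sqrtOneSubSq t.toCircle)
          * sqrtOneSubSq t.toCircle := by
        linear_combination -chiCirc t * coe_inv_mul_sqrtOneSubSq_sq t.toCircle

end SquareRoot

section SymmetricVectors

/-- The function `t + t⁻¹ = 2 cos θ`. -/
def twoCos : C(Circ, ℂ) :=
  fourier 1 + fourier (-1)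

theorem twoCos_apply (t : Circ) : twoCos t = (t.toCircle : ℂ) + (t.toCircle : ℂ)⁻¹ := by
  rw [twoCos, ContinuousMap.add_apply, fourier_eq_toCircle_zpow, fourier_eq_toCircle_zpow,
    zpow_one, zpow_neg_one]

theorem twoCos_coe (θ : ℝ) : twoCos θ = 2 * (Real.cos θ : ℂ) := by
  rw [twoCos_apply, coe_toCircle_coe, ← Complex.exp_neg, Complex.ofReal_cos, Complex.two_cos,
    mul_comm, neg_mul]

theorem conj_twoCos (t : Circ) : (starRingEnd ℂ) (twoCos t) = twoCos t := by
  rw [twoCos_apply, map_add, ← Circle.coe_inv, ← Circle.coe_inv_eq_conj,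
    ← Circle.coe_inv_eq_conj, inv_inv, add_comm]

theorem reflect_twoCos : reflect twoCos = twoCos := by
  ext t
  rw [reflect_apply, twoCos_apply, twoCos_apply, coe_toCircle_neg, inv_inv, add_comm]

/-- The function `(1 - t⁻²)^{1/2}` as a vector of `L²`. It is invariant under `chiFlip`, and its
squared modulus `2 |sin θ|` is twice the Jacobian of the substitution `x = cos θ`. -/
def sqrtVec : L2T :=
  ContinuousMap.toLp 2 haar ℂ (reflect (boundaryValue diffContOnCl_sqrtOneSubSq))

theorem sqrtVec_ae : sqrtVec =ᵐ[haar] fun t => sqrtOneSubSq (t.toCircle : ℂ)⁻¹ := by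
  filter_upwards [ContinuousMap.coeFn_toLp (p := 2) (𝕜 := ℂ) haar
    (reflect (boundaryValue diffContOnCl_sqrtOneSubSq))] with t ht
  rw [sqrtVec, ht, reflect_apply, boundaryValue_apply, coe_toCircle_neg]

theorem chiFlip_sqrtVec : chiFlip sqrtVec = sqrtVec := by
  apply Lp.ext
  filter_upwards [chiFlip_ae sqrtVec, sqrtVec_ae, ae_comp_neg sqrtVec_ae, ae_im_toCircle_ne_zero]
    with t h₁ h₂ h₃ h₄
  rw [h₁, h₂, h₃, coe_toCircle_neg, inv_inv, fourier_eq_toCircle_zpow, zpow_neg_one,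
    sqrtOneSubSq_toCircle_inv h₄]

/-- The `chiFlip`-invariant vectors `(t + t⁻¹)^k (1 - t⁻²)^{1/2}`. -/
def symVec (k : ℕ) : L2T :=
  mulC (twoCos ^ k) sqrtVec

theorem chiFlip_symVec (k : ℕ) : chiFlip (symVec k) = symVec k :=
  chiFlip_mulC_of_reflect_eq (by rw [map_pow, reflect_twoCos]) chiFlip_sqrtVec

theorem symVec_ae (k : ℕ) :
    symVec k =ᵐ[haar] fun t => twoCos t ^ k * sqrtOneSubSq (t.toCircle : ℂ)⁻¹ := by
  filter_upwards [mulC_ae (twoCos ^ k) sqrtVec, sqrtVec_ae] with t h₁ h₂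
  rw [symVec, h₁, h₂, ContinuousMap.pow_apply]

theorem fourierCoeff_symVec {j k : ℕ} (hkj : k ≤ j) :
    fourierCoeff (symVec k) j = 0 ^ (j - k) := by
  have hpoly : DiffContOnCl ℂ (fun z : ℂ => (1 + z ^ 2) ^ k) (Metric.ball 0 1) :=
    Differentiable.diffContOnCl (by fun_prop)
  have hΦ : DiffContOnCl ℂ (fun z : ℂ => (1 + z ^ 2) ^ k * sqrtOneSubSq z) (Metric.ball 0 1) :=
    hpoly.smul diffContOnCl_sqrtOneSubSq
  have hae : symVec k =ᵐ[haar] fun t => fourier (k : ℤ) t * reflect (boundaryValue hΦ) t := by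
    filter_upwards [symVec_ae k] with t ht
    rw [ht, twoCos_apply, reflect_apply, boundaryValue_apply, coe_toCircle_neg,
      fourier_eq_toCircle_zpow, zpow_natCast, ← mul_assoc, ← mul_pow]
    have hne := Circle.coe_ne_zero t.toCircle
    congr 2
    field_simp
  have hcoeff := fourierCoeff_boundaryValue_neg hΦ (j - k)
  rw [Nat.cast_sub hkj] at hcoeff
  rw [fourierCoeff_congr_ae hae, fourierCoeff_fourier_mul, fourierCoeff_reflect, hcoeff,
    sqrtOneSubSq_zero]
  simp

theorem isUnitUpperTriangular_coordMatrix_symVec :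
    IsUnitUpperTriangular (coordMatrix fun k => hardyProj (symVec k)) := by
  have hcoord {j k : ℕ} (hkj : k ≤ j) :
      coordMatrix (fun k => hardyProj (symVec k)) j k = 0 ^ (j - k) :=
    (inner_ee_hardyProj j _).trans (fourierCoeff_symVec hkj)
  refine ⟨fun j k hkj => ?_, fun j => ?_⟩
  · have hkj : k < j := hkj
    rw [hcoord hkj.le, zero_pow (Nat.sub_pos_of_lt hkj).ne']
  · rw [hcoord le_rfl, Nat.sub_self, pow_zero]

theorem inner_symVec_mulC_symVec (f : C(Circ, ℂ)) (j k : ℕ) :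
    ⟪symVec j, mulC f (symVec k)⟫_ℂ
      = ∫ t, f t * twoCos t ^ (j + k) * ((2 * |(t.toCircle : ℂ).im| : ℝ) : ℂ) ∂haar := by
  rw [inner_eq_integral]
  apply integral_congr_ae
  filter_upwards [symVec_ae j, symVec_ae k, mulC_ae f (symVec k)] with t h₁ h₂ h₃
  have hsq := conj_sqrtOneSubSq_mul_self t.toCircle
  rw [h₁, h₃, h₂, map_mul, map_pow, conj_twoCos, sqrtOneSubSq_coe_inv, Complex.conj_conj, ← hsq]
  ring

end SymmetricVectors

section CosineSubstitution

variable (F : ℝ → ℂ)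

theorem integral_comp_cos_mul_abs_sin_zero_pi :
    ∫ θ in (0:ℝ)..Real.pi, F (Real.cos θ) * (|Real.sin θ| : ℝ) = ∫ x in (-1:ℝ)..1, F x := by
  have h := intervalIntegral.integral_deriv_smul_comp_of_deriv_nonpos (a := 0) (b := Real.pi)
    (f := Real.cos) (f' := fun x => -Real.sin x) (g := F)
    Real.continuous_cos.continuousOn (fun x _ => Real.hasDerivAt_cos x) fun x hx => by
      rw [min_eq_left Real.pi_pos.le, max_eq_right Real.pi_pos.le] at hx
      exact neg_nonpos.mpr (Real.sin_pos_of_pos_of_lt_pi hx.1 hx.2).le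
  rw [Real.cos_zero, Real.cos_pi] at h
  rw [intervalIntegral.integral_symm 1 (-1), ← h, ← intervalIntegral.integral_neg]
  refine intervalIntegral.integral_congr fun θ hθ => ?_
  rw [Set.uIcc_of_le Real.pi_pos.le] at hθ
  simp only [abs_of_nonneg (Real.sin_nonneg_of_mem_Icc hθ), Function.comp_apply, neg_smul,
    neg_neg, Complex.real_smul, mul_comm]

theorem integral_comp_cos_mul_abs_sin_pi_two_pi :
    ∫ θ in Real.pi..(2 * Real.pi), F (Real.cos θ) * (|Real.sin θ| : ℝ)
      = ∫ x in (-1:ℝ)..1, F x := by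
  have h := intervalIntegral.integral_comp_sub_left
    (fun θ => F (Real.cos θ) * (|Real.sin θ| : ℝ)) (2 * Real.pi) (a := 0) (b := Real.pi)
  rw [sub_zero, show 2 * Real.pi - Real.pi = Real.pi by ring] at h
  simp only [Real.cos_two_pi_sub, Real.sin_two_pi_sub, abs_neg] at h
  rw [← h, integral_comp_cos_mul_abs_sin_zero_pi]

theorem integral_comp_cos_mul_abs_sin (hF : Continuous fun θ => F (Real.cos θ)) :
    ∫ θ in (0:ℝ)..(2 * Real.pi), F (Real.cos θ) * (|Real.sin θ| : ℝ)
      = 2 * ∫ x in (-1:ℝ)..1, F x := by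
  have hcont : Continuous fun θ => F (Real.cos θ) * (|Real.sin θ| : ℝ) :=
    hF.mul (Complex.continuous_ofReal.comp Real.continuous_sin.abs)
  rw [← intervalIntegral.integral_add_adjacent_intervals (hcont.intervalIntegrable 0 Real.pi)
    (hcont.intervalIntegrable _ _), integral_comp_cos_mul_abs_sin_zero_pi,
    integral_comp_cos_mul_abs_sin_pi_two_pi, two_mul]

theorem integral_haar_mul_twoCos_pow {f : C(Circ, ℂ)} {b : ℝ → ℂ}
    (hb : ∀ θ : ℝ, b (Real.cos θ) = f θ) (e : ℕ) :
    ∫ t, f t * twoCos t ^ e * ((2 * |(t.toCircle : ℂ).im| : ℝ) : ℂ) ∂haar = 2 * bmom b e := by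
  have hcont : Continuous fun θ : ℝ => b (Real.cos θ) * (2 * (Real.cos θ : ℂ)) ^ e := by
    simp only [hb]
    exact (f.continuous.comp (AddCircle.continuous_mk' _)).mul (by fun_prop)
  have hcos := integral_comp_cos_mul_abs_sin (fun x => b x * (2 * (x : ℂ)) ^ e) hcont
  rw [integral_haar, bmom]
  simp only [twoCos_coe, im_toCircle_coe, ← hb, Complex.ofReal_mul, mul_left_comm _ ((2 : ℝ) : ℂ),
    intervalIntegral.integral_const_mul, hcos]
  push_cast
  field_simp

theorem mul_inner_symVec_mulC_symVec {f : C(Circ, ℂ)} {b : ℝ → ℂ} {G : ℂ}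
    (hb : ∀ θ : ℝ, b (Real.cos θ) = G * f θ) (j k : ℕ) :
    G * ⟪symVec j, mulC f (symVec k)⟫_ℂ = 2 * bmom b (j + k) := by
  rw [← integral_haar_mul_twoCos_pow (f := G • f) hb, inner_symVec_mulC_symVec,
    ← integral_const_mul]
  simp only [ContinuousMap.smul_apply, smul_eq_mul, mul_assoc]

theorem mul_inner_evenCompression {f : C(Circ, ℂ)} (hf : reflect f = f) {b : ℝ → ℂ} {G : ℂ}
    (hb : ∀ θ : ℝ, b (Real.cos θ) = G * f θ) (j k : ℕ) :
    G * ⟪hardyProj (symVec j),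
      (↑oneAddChiHankel⁻¹ * evenCompression f : l2 →L[ℂ] l2) (hardyProj (symVec k))⟫_ℂ
      = bmom b (j + k) := by
  have hmoment := mul_inner_symVec_mulC_symVec hb j k
  rw [← two_mul_inner_hardyProj (chiFlip_symVec j)
    (chiFlip_mulC_of_reflect_eq hf (chiFlip_symVec k))] at hmoment
  rw [mul_apply_eq_comp, evenCompression_hardyProj f (chiFlip_symVec k)]
  linear_combination hmoment / 2

theorem det_bmom {f : C(Circ, ℂ)} (hf : reflect f = f) {b : ℝ → ℂ} {G : ℂ}
    (hb : ∀ θ : ℝ, b (Real.cos θ) = G * f θ) (n : ℕ) :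
    (Matrix.of fun j k : Fin n => bmom b ((j : ℕ) + k)).det
      = G ^ n * (finiteSection n
          (entMatrix (↑oneAddChiHankel⁻¹ * evenCompression f))).det := by
  have hG : G ^ n = G ^ Fintype.card (Fin n) := by rw [Fintype.card_fin]
  rw [← det_gram _ isUnitUpperTriangular_coordMatrix_symVec, hG, ← Matrix.det_smul]
  simp only [← mul_inner_evenCompression hf hb]
  rfl

end CosineSubstitution

section Inversion

theorem ent_oneAddChiHankelUnit (a : C(Circ, ℂ)ˣ) (ha : IsHardy a.val) (ha' : IsHardy a⁻¹.val)
    (j k : ℕ) :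
    ent (oneAddChiHankelUnit a ha ha') j k = (if j = k then 1 else 0)
      + fourierCoeff (fun t => (reflect a.val * a⁻¹.val) t * chiCirc t) (j + k + 1) := by
  rw [coe_oneAddChiHankelUnit, ent_add, ent_one, ent_chiHankel]

theorem det_bmom_eq_det_finiteSection_inv (a : C(Circ, ℂ)ˣ) (ha : IsHardy a.val)
    (ha' : IsHardy a⁻¹.val) (h0 : fourierCoeff a.val 0 = 1) {b : ℝ → ℂ} {G : ℂ}
    (hb : ∀ θ : ℝ, b (Real.cos θ) = G * (a.val * reflect a.val) θ) (n : ℕ) :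
    (Matrix.of fun j k : Fin n => bmom b ((j : ℕ) + k)).det
      = G ^ n * (finiteSection n (entMatrix ↑(oneAddChiHankelUnit a ha ha')⁻¹)).det := by
  have heven : reflect (a.val * reflect a.val) = a.val * reflect a.val :=
    congrArg Units.val (map_reflect_mul_map_reflect a)
  rw [det_finiteSection_inv a ha ha' h0, det_bmom heven hb]

variable {Φ : ℂ → ℂ}

/-- The boundary values of `Φ` as an invertible continuous function on the circle, when both `Φ` and
`Φ⁻¹` belong to the disk algebra. -/
def boundaryUnit (hΦ : DiffContOnCl ℂ Φ (Metric.ball 0 1))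
    (hΦi : DiffContOnCl ℂ Φ⁻¹ (Metric.ball 0 1)) (hnz : ∀ z, ‖z‖ ≤ 1 → Φ z ≠ 0) :
    C(Circ, ℂ)ˣ where
  val := boundaryValue hΦ
  inv := boundaryValue hΦi
  val_inv := ContinuousMap.ext fun t => mul_inv_cancel₀ (hnz _ (Circle.norm_coe t.toCircle).le)
  inv_val := ContinuousMap.ext fun t => inv_mul_cancel₀ (hnz _ (Circle.norm_coe t.toCircle).le)

theorem boundaryValue_coe (hΦ : DiffContOnCl ℂ Φ (Metric.ball 0 1)) (θ : ℝ) :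
    boundaryValue hΦ θ = Φ (Complex.exp (Complex.I * θ)) := by
  rw [boundaryValue_apply, coe_toCircle_coe]

theorem reflect_boundaryValue_coe (hΦ : DiffContOnCl ℂ Φ (Metric.ball 0 1)) (θ : ℝ) :
    reflect (boundaryValue hΦ) θ = Φ (Complex.exp (-(Complex.I * θ))) := by
  rw [reflect_apply, boundaryValue_apply, coe_toCircle_neg, coe_toCircle_coe, Complex.exp_neg]

theorem stmt7_general (cplus : ℂ → ℂ) (hcplus : DiffContOnCl ℂ cplus (Metric.ball 0 1))
    (h0 : cplus 0 = 1) (hnz : ∀ z : ℂ, ‖z‖ ≤ 1 → cplus z ≠ 0) (G : ℂ) (b : ℝ → ℂ)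
    (hb : ∀ θ : ℝ, b (Real.cos θ) =
      cplus (Complex.exp (-(Complex.I * θ))) * G * cplus (Complex.exp (Complex.I * θ)))
    (ψ : ℝ → ℂ)
    (hψ : ∀ θ : ℝ, ψ θ =
      cplus (Complex.exp (-(Complex.I * θ))) *
        (cplus (Complex.exp (Complex.I * θ)))⁻¹ * chi θ)
    (A : l2 →L[ℂ] l2)
    (hA : ∀ j k : ℕ, ent A j k = (if j = k then 1 else 0) + fc ψ ((j : ℤ) + k + 1)) :
    ∃ A' : l2 →L[ℂ] l2, A ∘L A' = 1 ∧ A' ∘L A = 1 ∧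
      ∀ n : ℕ, (Matrix.of fun j k : Fin n => bmom b ((j : ℕ) + k)).det
          = G ^ n * (Matrix.of fun j k : Fin n => ent A' j k).det := by
  have hinv : DiffContOnCl ℂ cplus⁻¹ (Metric.ball 0 1) := hcplus.inv fun z hz => by
    rw [closure_ball _ one_ne_zero, mem_closedBall_zero_iff] at hz
    exact hnz z hz
  let a := boundaryUnit hcplus hinv hnz
  have ha : IsHardy a.val := isHardy_boundaryValue hcplus
  have ha' : IsHardy a⁻¹.val := isHardy_boundaryValue hinv
  have ha0 : fourierCoeff a.val 0 = 1 := (fourierCoeff_boundaryValue_zero hcplus).trans h0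
  have hsymbol (θ : ℝ) : (reflect a.val * a⁻¹.val) θ * chiCirc θ = ψ θ := by
    rw [hψ, ← reflect_boundaryValue_coe hcplus, ← boundaryValue_coe hcplus, chiCirc_coe]
    rfl
  have hA_eq : A = oneAddChiHankelUnit a ha ha' := ext_ent fun j k => by
    rw [hA, ent_oneAddChiHankelUnit, fourierCoeff_eq_fc hsymbol]
  have hb' (θ : ℝ) : b (Real.cos θ) = G * (a.val * reflect a.val) θ := by
    rw [hb, ← reflect_boundaryValue_coe hcplus, ← boundaryValue_coe hcplus, mul_comm _ G,
      mul_assoc, mul_comm (reflect _ _)]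
    rfl
  exact ⟨↑(oneAddChiHankelUnit a ha ha')⁻¹, hA_eq ▸ Units.mul_inv _, hA_eq ▸ Units.inv_mul _,
    det_bmom_eq_det_finiteSection_inv a ha ha' ha0 hb'⟩

end Inversion

/-- Let `c` be even on the circle with absolutely summable Fourier coefficients and
factorization `c(e^{iθ}) = c₊(e^{−iθ}) G c₊(e^{iθ})`.  Define `b(cos θ) = c(e^{iθ})` and
`ψ(e^{iθ}) = c₊(e^{−iθ}) c₊(e^{iθ})⁻¹ χ(e^{iθ})`.  Then any bounded operator `I + H(ψ)`
on ℓ²(ℕ) is invertible and for all `n ≥ 1`: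
`det H_n[b] = Gⁿ · det[Pₙ (I + H(ψ))⁻¹ Pₙ]`. -/
theorem stmt7 (d : ℤ → ℂ) (hd : Summable fun k => ‖d k‖)
    (c : ℝ → ℂ)
    (hcdef : ∀ θ : ℝ, c θ = ∑' k : ℤ, d k * Complex.exp (Complex.I * k * θ))
    (heven : ∀ k : ℤ, d k = d (-k))
    (γ : ℕ → ℂ) (hγ : Summable fun k => ‖γ k‖)
    (cplus : ℂ → ℂ) (hcplus : ∀ z : ℂ, cplus z = ∑' k : ℕ, γ k * z ^ k)
    (h0 : cplus 0 = 1)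
    (hnz : ∀ z : ℂ, ‖z‖ ≤ 1 → cplus z ≠ 0)
    (G : ℂ)
    (hfact : ∀ θ : ℝ, c θ =
      cplus (Complex.exp (-(Complex.I * θ))) * G * cplus (Complex.exp (Complex.I * θ)))
    (b : ℝ → ℂ) (hb : ∀ θ : ℝ, b (Real.cos θ) = c θ)
    (ψ : ℝ → ℂ)
    (hψ : ∀ θ : ℝ, ψ θ =
      cplus (Complex.exp (-(Complex.I * θ))) *
        (cplus (Complex.exp (Complex.I * θ)))⁻¹ * chi θ)
    (A : l2 →L[ℂ] l2)
    (hA : ∀ j k : ℕ, ent A j k =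
      (if j = k then 1 else 0) + fc ψ ((j : ℤ) + k + 1)) :
    ∃ A' : l2 →L[ℂ] l2, A ∘L A' = 1 ∧ A' ∘L A = 1 ∧
      ∀ n : ℕ, 1 ≤ n →
        (Matrix.of fun j k : Fin n => bmom b ((j : ℕ) + k)).det
          = G ^ n * (Matrix.of fun j k : Fin n => ent A' j k).det := by
  obtain rfl := funext hcplus
  obtain ⟨A', hAA', hA'A, hdet⟩ := stmt7_general _ (diffContOnCl_tsum_pow hγ) h0 hnz G b
    (fun θ => (hb θ).trans (hfact θ)) ψ hψ A hA
  exact ⟨A', hAA', hA'A, fun n _ => hdet n⟩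

end
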